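/- arXiv:2003.05064 — 7 statements merged into one kernel-verified Lean document; each statement's English description precedes it below -/
import Mathlib

section
/- If C is a self-dual code of length n over F₂+uF₂, then its Gray image φ(C) (an F₂-subspace of F₂^{2n}) is a self-dual binary code of length 2n. -/
/-- The four-element ring `F₂ + uF₂ = F₂[u]`, `u² = 0`: the dual numbers over `ZMod 2`. -/
abbrev F2u : Type := DualNumber (ZMod 2)

/-- The Euclidean dual of a set of vectors `C ⊆ Rⁿ`:
`C⊥ = {x : ∀ y ∈ C, ⟨x,y⟩ = 0}` where `⟨x,y⟩ = ∑ xᵢyᵢ`. -/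
def dualCode {R : Type*} [CommRing R] {ι : Type*} [Fintype ι] (C : Set (ι → R)) :
    Set (ι → R) :=
  {x | ∀ y ∈ C, ∑ i, x i * y i = 0}

/-- The Gray map `φ : (F₂+uF₂)ⁿ → F₂^{2n}`, sending `x = ā + b̄u` to `(b̄, ā + b̄)`. -/
def grayMap (n : ℕ) (x : Fin n → F2u) : (Fin n ⊕ Fin n) → ZMod 2 :=
  Sum.elim (fun i => (x i).snd) (fun i => (x i).fst + (x i).snd)

theorem gray_inner (n : ℕ) (x y : Fin n → F2u) :
    ∑ i, grayMap n x i * grayMap n y i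
      = (∑ i, x i * y i).fst + (∑ i, x i * y i).snd := by
  rw [TrivSqZeroExt.fst_sum, TrivSqZeroExt.snd_sum, ← Finset.sum_add_distrib,
    Fintype.sum_sum_type, ← Finset.sum_add_distrib]
  refine Finset.sum_congr rfl fun i _ => ?_
  simp only [grayMap, Sum.elim_inl, Sum.elim_inr, TrivSqZeroExt.fst_mul, TrivSqZeroExt.snd_mul,
    smul_eq_mul, MulOpposite.smul_eq_mul_unop, MulOpposite.unop_op]
  generalize (x i).fst = a
  generalize (x i).snd = b
  generalize (y i).fst = c
  generalize (y i).snd = d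
  revert a b c d
  decide

theorem gray_surj (n : ℕ) (w : (Fin n ⊕ Fin n) → ZMod 2) : ∃ z, grayMap n z = w := by
  refine ⟨fun i => (w (Sum.inr i) - w (Sum.inl i), w (Sum.inl i)), ?_⟩
  funext i
  rcases i with i | i
  · rfl
  · exact sub_add_cancel _ _

/-- If `C` is a self-dual code of length `n` over `F₂+uF₂`, then its Gray image `φ(C)` is an
`F₂`-subspace of `F₂^{2n}` which is a self-dual binary code of length `2n`. -/
theorem gray_image_of_selfDual_is_selfDual (n : ℕ) (C : Submodule F2u (Fin n → F2u))
    (hC : (C : Set (Fin n → F2u)) = dualCode (C : Set (Fin n → F2u))) :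
    (∃ D : Submodule (ZMod 2) ((Fin n ⊕ Fin n) → ZMod 2),
      (D : Set ((Fin n ⊕ Fin n) → ZMod 2)) = grayMap n '' (C : Set (Fin n → F2u))) ∧
    grayMap n '' (C : Set (Fin n → F2u)) =
      dualCode (grayMap n '' (C : Set (Fin n → F2u))) := by
  have key : grayMap n '' (C : Set (Fin n → F2u)) =
      dualCode (grayMap n '' (C : Set (Fin n → F2u))) := by
    ext w
    constructor
    · rintro ⟨x, hx, rfl⟩ _ ⟨y, hy, rfl⟩
      rw [hC] at hx
      rw [gray_inner, hx y hy]
      simp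
    · intro hw
      obtain ⟨z, rfl⟩ := gray_surj n w
      refine ⟨z, ?_, rfl⟩
      rw [hC]
      intro y hy
      have h1 := hw _ ⟨y, hy, rfl⟩
      have h2 := hw _ ⟨(DualNumber.eps : F2u) • y, C.smul_mem _ hy, rfl⟩
      rw [gray_inner] at h1 h2
      have h3 : ∑ i, z i * ((DualNumber.eps : F2u) • y) i = DualNumber.eps * ∑ i, z i * y i := by
        rw [Finset.mul_sum]
        refine Finset.sum_congr rfl fun i _ => ?_
        simp only [Pi.smul_apply, smul_eq_mul]
        ring
      rw [h3] at h2
      have h4 : (∑ i, z i * y i).fst = 0 := by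
        simpa [TrivSqZeroExt.fst_mul, TrivSqZeroExt.snd_mul] using h2
      rw [h4, zero_add] at h1
      exact TrivSqZeroExt.ext h4 h1
  refine ⟨?_, key⟩
  refine ⟨{ carrier := dualCode (grayMap n '' (C : Set (Fin n → F2u)))
            add_mem' := ?_
            zero_mem' := ?_
            smul_mem' := ?_ }, key.symm⟩
  · intro a b ha hb y hy
    simp only [Pi.add_apply, add_mul, Finset.sum_add_distrib]
    rw [ha y hy, hb y hy, add_zero]
  · intro y hy
    simp
  · intro c a ha y hy
    simp only [Pi.smul_apply, smul_eq_mul, mul_assoc, ← Finset.mul_sum]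
    rw [ha y hy, mul_zero]
end

section
/- Suppose C is a self-dual code of length 2n over F₂+uF₂ generated by the rows of a matrix [Iₙ | A], where Iₙ is the n×n identity matrix and A is an n×n matrix over F₂+uF₂ (i.e., C is the F₂+uF₂-span of these n rows). Then the projection μ(C) ⊆ F₂^{2n} is a self-dual binary code of length 2n. -/
/-- The componentwise projection `μ : (F₂+uF₂)ⁿ → F₂ⁿ`, `a + bu ↦ a` in each coordinate. -/
def muVec {ι : Type*} (x : ι → F2u) : ι → ZMod 2 := fun i => (x i).fst

/-- If `C` is a self-dual code of length `2n` over `F₂+uF₂` generated by the rows of a matrix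
`[Iₙ | A]`, then the projection `μ(C)` is a self-dual binary code of length `2n`. -/
theorem mu_image_selfDual_of_identity_block_generator (n : ℕ)
    (A : Matrix (Fin n) (Fin n) F2u)
    (C : Submodule F2u ((Fin n ⊕ Fin n) → F2u))
    (hgen : C = Submodule.span F2u (Set.range fun i : Fin n =>
      (Sum.elim (fun j => if i = j then (1 : F2u) else 0) (fun j => A i j) :
        (Fin n ⊕ Fin n) → F2u)))
    (hsd : (C : Set ((Fin n ⊕ Fin n) → F2u)) = dualCode (C : Set ((Fin n ⊕ Fin n) → F2u))) :
    (∃ D : Submodule (ZMod 2) ((Fin n ⊕ Fin n) → ZMod 2),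
      (D : Set ((Fin n ⊕ Fin n) → ZMod 2)) = muVec '' (C : Set ((Fin n ⊕ Fin n) → F2u))) ∧
    muVec '' (C : Set ((Fin n ⊕ Fin n) → F2u)) =
      dualCode (muVec '' (C : Set ((Fin n ⊕ Fin n) → F2u))) := by
  classical
  have hfs : ∀ f : (Fin n ⊕ Fin n) → F2u, (∑ i, f i).fst = ∑ i, (f i).fst := fun f =>
    map_sum (TrivSqZeroExt.fstHom (ZMod 2) (ZMod 2) (ZMod 2)) f Finset.univ
  have hfs2 : ∀ f : (Fin n ⊕ Fin n) → F2u, (∑ i, f i).snd = ∑ i, (f i).snd := fun f =>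
    map_sum (TrivSqZeroExt.sndHom (ZMod 2) (ZMod 2)) f Finset.univ
  have hgs : ∀ f : Fin n → F2u, (∑ i, f i).fst = ∑ i, (f i).fst := fun f =>
    map_sum (TrivSqZeroExt.fstHom (ZMod 2) (ZMod 2) (ZMod 2)) f Finset.univ
  have hgs2 : ∀ f : Fin n → F2u, (∑ i, f i).snd = ∑ i, (f i).snd := fun f =>
    map_sum (TrivSqZeroExt.sndHom (ZMod 2) (ZMod 2)) f Finset.univ
  have hmem : ∀ x, x ∈ C ↔ ∀ j, x (Sum.inr j) = ∑ i, x (Sum.inl i) * A i j := by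
    intro x
    rw [hgen, Submodule.mem_span_range_iff_exists_fun]
    constructor
    · rintro ⟨c, rfl⟩ j
      simp [Finset.sum_apply]
    · intro h
      refine ⟨fun i => x (Sum.inl i), ?_⟩
      ext1 k
      rcases k with k | k
      · simp [Finset.sum_apply]
      · simp [Finset.sum_apply, h]
  refine ⟨⟨{ carrier := muVec '' (C : Set ((Fin n ⊕ Fin n) → F2u)), add_mem' := ?_, zero_mem' := ?_, smul_mem' := ?_ }, rfl⟩, ?_⟩
  · rintro _ _ ⟨a, ha, rfl⟩ ⟨b, hb, rfl⟩
    exact ⟨a + b, C.add_mem ha hb, by ext i; simp [muVec]⟩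
  · exact ⟨0, C.zero_mem, by ext i; simp [muVec]⟩
  · rintro c _ ⟨a, ha, rfl⟩
    exact ⟨(TrivSqZeroExt.inl c : F2u) • a, C.smul_mem _ ha, by ext i; simp [muVec]⟩
  · ext x
    constructor
    · rintro ⟨a, ha, rfl⟩ _ ⟨b, hb, rfl⟩
      have h1 : a ∈ dualCode (C : Set ((Fin n ⊕ Fin n) → F2u)) := hsd ▸ ha
      have h2 := congrArg TrivSqZeroExt.fst (h1 b hb)
      rw [hfs] at h2
      simpa [muVec] using h2
    · intro hx
      have hu : (fun k => (TrivSqZeroExt.inr (x k) : F2u)) ∈ (C : Set ((Fin n ⊕ Fin n) → F2u)) := by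
        rw [hsd]
        intro y hy
        have h := hx _ ⟨y, hy, rfl⟩
        apply TrivSqZeroExt.ext
        · rw [hfs]; simp
        · rw [hfs2]; simpa [muVec, mul_comm] using h
      have hu2 := (hmem _).1 hu
      refine ⟨Sum.elim (fun i => TrivSqZeroExt.inl (x (Sum.inl i)))
        (fun j => ∑ i, TrivSqZeroExt.inl (x (Sum.inl i)) * A i j), (hmem _).2 (by simp), ?_⟩
      ext k
      rcases k with k | k
      · simp [muVec]
      · have h := congrArg TrivSqZeroExt.snd (hu2 k)
        rw [hgs2] at h
        simp only [muVec, Sum.elim_inr]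
        rw [hgs]
        simpa [mul_comm] using h.symm
end

section
/- Let C be a linear code over F₂+uF₂ of length n and let C' = μ(C) be its projection to F₂. If C' contains a nonzero codeword, then the minimum Lee weight d of the nonzero codewords of C and the minimum Hamming weight d' of the nonzero codewords of C' satisfy d ≤ 2d'. (Equivalently: for every nonzero c' ∈ μ(C) there is a nonzero c ∈ C whose Lee weight is at most twice the Hamming weight of c'.) -/
/-- The Lee weight on `F₂+uF₂`: `0, 1, u, 1+u` have Lee weights `0, 1, 2, 1` respectively. -/
noncomputable def leeWeight (x : F2u) : ℕ :=
  letI := Classical.decEq F2u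
  if x = 0 then 0 else if x = 1 then 1 else if x = DualNumber.eps then 2 else 1

/-- The Lee weight of a vector over `F₂+uF₂` is the sum of the Lee weights of its coordinates. -/
noncomputable def leeWt {n : ℕ} (x : Fin n → F2u) : ℕ := ∑ i, leeWeight (x i)

/-- Let `C` be a linear code over `F₂+uF₂` of length `n` and `C' = μ(C)` its binary projection.
If `C'` contains a nonzero codeword, then the minimum Lee weight `d` of the nonzero codewords of
`C` and the minimum Hamming weight `d'` of the nonzero codewords of `C'` satisfy `d ≤ 2d'`;
equivalently, for every nonzero `c' ∈ μ(C)` there is a nonzero `c ∈ C` whose Lee weight is at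
most twice the Hamming weight of `c'`. -/
theorem min_lee_weight_le_two_mul_min_hamming_weight_of_projection
    (n : ℕ) (C : Submodule F2u (Fin n → F2u))
    (hne : ∃ c' ∈ muVec '' (C : Set (Fin n → F2u)), c' ≠ (0 : Fin n → ZMod 2)) :
    sInf {w : ℕ | ∃ c ∈ C, c ≠ (0 : Fin n → F2u) ∧ leeWt c = w} ≤
      2 * sInf {w : ℕ | ∃ c' ∈ muVec '' (C : Set (Fin n → F2u)),
        c' ≠ (0 : Fin n → ZMod 2) ∧ hammingNorm c' = w} ∧
    ∀ c' ∈ muVec '' (C : Set (Fin n → F2u)), c' ≠ (0 : Fin n → ZMod 2) →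
      ∃ c ∈ C, c ≠ (0 : Fin n → F2u) ∧ leeWt c ≤ 2 * hammingNorm c' := by
  have key : ∀ c' ∈ muVec '' (C : Set (Fin n → F2u)), c' ≠ (0 : Fin n → ZMod 2) →
      ∃ c ∈ C, c ≠ (0 : Fin n → F2u) ∧ leeWt c ≤ 2 * hammingNorm c' := by
    rintro _ ⟨x, hx, rfl⟩ hne
    refine ⟨(DualNumber.eps : F2u) • x, C.smul_mem _ hx, ?_, ?_⟩
    · intro h
      apply hne
      funext i
      have h2 := congrArg TrivSqZeroExt.snd (congrFun h i)
      simpa [muVec] using h2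
    · unfold leeWt hammingNorm
      rw [Finset.card_filter, Finset.mul_sum]
      refine Finset.sum_le_sum fun i _ => ?_
      by_cases h : muVec x i = 0
      · have h0 : ((DualNumber.eps : F2u) • x) i = 0 := by
          have h' : (x i).fst = 0 := h
          ext <;> simp [h']
        rw [h0]
        simp [leeWeight]
      · rw [if_pos h]
        unfold leeWeight
        split_ifs <;> omega
  refine ⟨?_, key⟩
  obtain ⟨c', hc', h0⟩ := hne
  obtain ⟨d, hd, hd0, hw⟩ := Nat.sInf_mem (s := {w : ℕ | ∃ c' ∈ muVec '' (C : Set (Fin n → F2u)),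
        c' ≠ (0 : Fin n → ZMod 2) ∧ hammingNorm c' = w}) ⟨_, c', hc', h0, rfl⟩
  obtain ⟨c, hc, hc0, hle⟩ := key d hd hd0
  rw [← hw]
  refine le_trans (Nat.sInf_le ?_) hle
  exact ⟨c, hc, hc0, rfl⟩
end

section
/- Let G be a finite group of order n and v₁, v₂, v₃ ∈ F₂G, where F₂ = ZMod 2. Let A be the 2n×2n block matrix with blocks σ(v₁), σ(v₂) in the first block row and σ(v₂), σ(v₃) in the second block row, and let C_σ ⊆ F₂^{4n} be the span of the rows of the 2n×4n matrix (I_{2n} | A). Then C_σ is a self-dual code of length 4n if and only if σ(v₁v₁* + v₂v₂*) = Iₙ, σ(v₁v₂* + v₂v₃*) = 0, σ(v₂v₁* + v₃v₂*) = 0, and σ(v₂v₂* + v₃v₃*) = Iₙ. -/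
open Matrix

/-- For `v = ∑ α_g g` in the group ring `RG`, `σ(v)` is the `G × G` matrix over `R` whose
`(g, h)` entry is the coefficient `α_{g⁻¹h}`. -/
def sigma {R G : Type*} [CommRing R] [Group G] (v : MonoidAlgebra R G) : Matrix G G R :=
  Matrix.of fun g h => v.coeff (g⁻¹ * h)

/-- The canonical involution on a group ring: `v* = ∑ α_g g⁻¹` for `v = ∑ α_g g`. -/
def invol {R G : Type*} [CommRing R] [Group G] (v : MonoidAlgebra R G) : MonoidAlgebra R G :=
  MonoidAlgebra.ofCoeff (Finsupp.equivMapDomain (Equiv.inv G) v.coeff)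

lemma sigma_add_aux {R G : Type*} [CommRing R] [Group G] (v w : MonoidAlgebra R G) :
    sigma (v + w) = sigma v + sigma w := by
  ext g h
  simp [sigma]

lemma sigma_mul_aux {R G : Type*} [CommRing R] [Group G] [Fintype G] [DecidableEq G]
    (v w : MonoidAlgebra R G) :
    sigma (v * w) = sigma v * sigma w := by
  ext g h
  simp only [sigma, Matrix.mul_apply, Matrix.of_apply]
  rw [MonoidAlgebra.coeff_mul_antidiag v w (g⁻¹ * h)
    (Finset.univ.image fun k : G => (g⁻¹ * k, k⁻¹ * h))]
  · rw [Finset.sum_image]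
    intro a _ b _ hab
    simpa using congrArg Prod.fst hab
  · rintro ⟨a, b⟩
    simp only [Finset.mem_image, Finset.mem_univ, true_and, Prod.mk.injEq]
    constructor
    · rintro ⟨k, rfl, rfl⟩
      group
    · intro hab
      refine ⟨g * a, by group, ?_⟩
      have : h = g * (a * b) := by rw [hab]; group
      rw [this]; group

lemma sigma_invol_aux {R G : Type*} [CommRing R] [Group G] (v : MonoidAlgebra R G) :
    sigma (invol v) = (sigma v)ᵀ := by
  ext g h
  simp [sigma, invol, Finsupp.equivMapDomain_apply]

lemma selfDual_aux {ι : Type*} [Fintype ι] [DecidableEq ι] (A : Matrix ι ι (ZMod 2))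
    (C : Submodule (ZMod 2) ((ι ⊕ ι) → ZMod 2))
    (hC : C = Submodule.span (ZMod 2) (Set.range fun k : ι =>
      (Sum.elim (fun j => if k = j then (1 : ZMod 2) else 0) (fun j => A k j) :
        (ι ⊕ ι) → ZMod 2))) :
    (C : Set ((ι ⊕ ι) → ZMod 2)) = dualCode (C : Set ((ι ⊕ ι) → ZMod 2)) ↔ A * Aᵀ = 1 := by
  have hmem : ∀ x, x ∈ C ↔ x ∘ Sum.inr = (x ∘ Sum.inl) ᵥ* A := by
    intro x
    rw [hC, Submodule.mem_span_range_iff_exists_fun]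
    constructor
    · rintro ⟨c, rfl⟩
      have : (∑ k, c k • (Sum.elim (fun j => if k = j then (1 : ZMod 2) else 0)
          (fun j => A k j) : (ι ⊕ ι) → ZMod 2)) ∘ Sum.inl = c := by
        ext j; simp
      rw [this]
      ext j
      simp [Matrix.vecMul, dotProduct]
    · intro h
      refine ⟨x ∘ Sum.inl, ?_⟩
      ext (j | j)
      · simp
      · have := congrFun h j
        simp [Matrix.vecMul, dotProduct] at this
        simp [this]
  have hrow : ∀ k : ι, (Sum.elim (fun j => if k = j then (1 : ZMod 2) else 0)
      (fun j => A k j) : (ι ⊕ ι) → ZMod 2) ∈ C := by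
    intro k
    rw [hC]
    exact Submodule.subset_span ⟨k, rfl⟩
  have hdual : ∀ x, x ∈ dualCode (C : Set ((ι ⊕ ι) → ZMod 2)) ↔
      x ∘ Sum.inl = A *ᵥ (x ∘ Sum.inr) := by
    intro x
    constructor
    · intro h
      ext k
      have := h _ (hrow k)
      simp only [Fintype.sum_sum_type, Sum.elim_inl, Sum.elim_inr, mul_ite, mul_one, mul_zero,
        Finset.sum_ite_eq, Finset.mem_univ, if_true] at this
      rw [CharTwo.add_eq_zero] at this
      simp only [Function.comp_apply, this, Matrix.mulVec, dotProduct]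
      exact Finset.sum_congr rfl fun _ _ => mul_comm _ _
    · intro h y hy
      have hy' := (hmem y).1 hy
      have e : ∑ i, x i * y i = (x ∘ Sum.inl) ⬝ᵥ (y ∘ Sum.inl)
          + (x ∘ Sum.inr) ⬝ᵥ (y ∘ Sum.inr) := by
        simp [dotProduct]
      rw [e, hy', h, CharTwo.add_eq_zero, dotProduct_comm (x ∘ Sum.inr),
        ← Matrix.dotProduct_mulVec, dotProduct_comm]
  constructor
  · intro h
    ext k l
    have hk := hrow l
    rw [← SetLike.mem_coe, h, hdual] at hk
    have := congrFun hk k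
    simp only [Function.comp_apply, Sum.elim_inl] at this
    rw [Matrix.one_apply, eq_comm]
    simp only [eq_comm (a := k)]
    rw [this]
    simp [Matrix.mul_apply, Matrix.mulVec, dotProduct]
  · intro h
    have h' : Aᵀ * A = 1 := mul_eq_one_comm.1 h
    ext x
    rw [SetLike.mem_coe, hmem, hdual]
    constructor
    · intro hx
      rw [hx, ← Matrix.mulVec_transpose, Matrix.mulVec_mulVec, h, Matrix.one_mulVec]
    · intro hx
      rw [hx, ← Matrix.mulVec_transpose, Matrix.mulVec_mulVec, h', Matrix.one_mulVec]

/-- Let `G` be a finite group of order `n` and `v₁, v₂, v₃ ∈ F₂G`. Let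
`A = [[σ(v₁), σ(v₂)], [σ(v₂), σ(v₃)]]` and let `C_σ ⊆ F₂^{4n}` be the span of the rows of
`(I_{2n} | A)`. Then `C_σ` is self-dual if and only if `σ(v₁v₁* + v₂v₂*) = Iₙ`,
`σ(v₁v₂* + v₂v₃*) = 0`, `σ(v₂v₁* + v₃v₂*) = 0` and `σ(v₂v₂* + v₃v₃*) = Iₙ`. -/
theorem groupRing_construction_selfDual_iff {G : Type*} [Group G] [Fintype G] [DecidableEq G]
    (n : ℕ) (hn : Fintype.card G = n) (v₁ v₂ v₃ : MonoidAlgebra (ZMod 2) G)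
    (A : Matrix (G ⊕ G) (G ⊕ G) (ZMod 2))
    (hA : A = Matrix.fromBlocks (sigma v₁) (sigma v₂) (sigma v₂) (sigma v₃))
    (C : Submodule (ZMod 2) (((G ⊕ G) ⊕ (G ⊕ G)) → ZMod 2))
    (hC : C = Submodule.span (ZMod 2) (Set.range fun k : G ⊕ G =>
      (Sum.elim (fun j => if k = j then (1 : ZMod 2) else 0) (fun j => A k j) :
        ((G ⊕ G) ⊕ (G ⊕ G)) → ZMod 2))) :
    (C : Set (((G ⊕ G) ⊕ (G ⊕ G)) → ZMod 2)) =
        dualCode (C : Set (((G ⊕ G) ⊕ (G ⊕ G)) → ZMod 2)) ↔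
      (sigma (v₁ * invol v₁ + v₂ * invol v₂) = 1 ∧
       sigma (v₁ * invol v₂ + v₂ * invol v₃) = 0 ∧
       sigma (v₂ * invol v₁ + v₃ * invol v₂) = 0 ∧
       sigma (v₂ * invol v₂ + v₃ * invol v₃) = 1) := by
  rw [selfDual_aux A C hC, hA, Matrix.fromBlocks_transpose, Matrix.fromBlocks_multiply,
    ← Matrix.fromBlocks_one, Matrix.fromBlocks_inj]
  simp only [sigma_add_aux, sigma_mul_aux, sigma_invol_aux]
end

section
/- Let C ⊆ F₂ⁿ (F₂ = ZMod 2) be a self-dual binary code spanned by vectors r₁, …, r_k, and let X ∈ F₂ⁿ satisfy ⟨X,X⟩ = 1. Set yᵢ = ⟨rᵢ, X⟩ for each i. Then the code D ⊆ F₂^{n+2} spanned by the vector (1, 0, X) together with the vectors (yᵢ, yᵢ, rᵢ), 1 ≤ i ≤ k, is a self-dual code of length n+2. -/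
/-- Extension theorem over `F₂`: if `C ⊆ F₂ⁿ` is a self-dual binary code spanned by
`r₁, …, r_k` and `X ∈ F₂ⁿ` satisfies `⟨X,X⟩ = 1`, then with `yᵢ = ⟨rᵢ, X⟩`, the code
`D ⊆ F₂^{n+2}` spanned by `(1, 0, X)` together with the `(yᵢ, yᵢ, rᵢ)` is a self-dual code of
length `n + 2`. -/
theorem extension_selfDual_F2 (n k : ℕ) (r : Fin k → (Fin n → ZMod 2))
    (C : Submodule (ZMod 2) (Fin n → ZMod 2))
    (hgen : C = Submodule.span (ZMod 2) (Set.range r))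
    (hsd : (C : Set (Fin n → ZMod 2)) = dualCode (C : Set (Fin n → ZMod 2)))
    (X : Fin n → ZMod 2) (hX : ∑ i, X i * X i = 1)
    (y : Fin k → ZMod 2) (hy : ∀ i, y i = ∑ j, r i j * X j)
    (D : Submodule (ZMod 2) ((Fin 2 ⊕ Fin n) → ZMod 2))
    (hD : D = Submodule.span (ZMod 2)
      ({(Sum.elim ![1, 0] X : (Fin 2 ⊕ Fin n) → ZMod 2)} ∪
        Set.range fun i : Fin k =>
          (Sum.elim ![y i, y i] (r i) : (Fin 2 ⊕ Fin n) → ZMod 2))) :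
    (D : Set ((Fin 2 ⊕ Fin n) → ZMod 2)) = dualCode (D : Set ((Fin 2 ⊕ Fin n) → ZMod 2)) := by
  have h2 : ∀ a : ZMod 2, a + a = 0 := by decide
  have hC : ∀ x, x ∈ C ↔ ∀ w ∈ C, x ⬝ᵥ w = 0 := by
    intro x
    constructor
    · intro hx
      have : x ∈ dualCode (C : Set (Fin n → ZMod 2)) := hsd ▸ hx
      exact this
    · intro hx
      have : x ∈ (C : Set (Fin n → ZMod 2)) := by
        rw [hsd]; exact hx
      exact this
  have hX' : X ⬝ᵥ X = 1 := hX
  have hy' : ∀ i, y i = r i ⬝ᵥ X := hy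
  have hr : ∀ i, r i ∈ C := fun i => hgen ▸ Submodule.subset_span ⟨i, rfl⟩
  have hXD : (Sum.elim ![1, 0] X : (Fin 2 ⊕ Fin n) → ZMod 2) ∈ D := by
    rw [hD]; exact Submodule.subset_span (Or.inl rfl)
  have hφ : ∀ w ∈ C, (Sum.elim ![w ⬝ᵥ X, w ⬝ᵥ X] w : (Fin 2 ⊕ Fin n) → ZMod 2) ∈ D := by
    intro w hw
    rw [hgen] at hw
    induction hw using Submodule.span_induction with
    | mem x hx =>
      obtain ⟨i, rfl⟩ := hx
      rw [hD, ← hy']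
      exact Submodule.subset_span (Or.inr ⟨i, rfl⟩)
    | zero =>
      convert D.zero_mem using 1
      ext j
      rcases j with j | j
      · fin_cases j <;> simp
      · simp
    | add u v _ _ hu hv =>
      convert D.add_mem hu hv using 1
      ext j
      rcases j with j | j
      · fin_cases j <;> simp [add_dotProduct]
      · simp
    | smul a u _ hu =>
      convert D.smul_mem a hu using 1
      ext j
      rcases j with j | j
      · fin_cases j <;> simp [smul_dotProduct]
      · simp
  have hel : ∀ v ∈ D, ∃ c : ZMod 2, ∃ w ∈ C, v = Sum.elim ![c + w ⬝ᵥ X, w ⬝ᵥ X] (c • X + w) := by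
    intro v hv
    rw [hD] at hv
    induction hv using Submodule.span_induction with
    | mem x hx =>
      rcases hx with hx | ⟨i, rfl⟩
      · refine ⟨1, 0, C.zero_mem, ?_⟩
        rw [Set.mem_singleton_iff.mp hx]
        simp
      · refine ⟨0, r i, hr i, ?_⟩
        simp [hy']
    | zero =>
      refine ⟨0, 0, C.zero_mem, ?_⟩
      ext j
      rcases j with j | j
      · fin_cases j <;> simp
      · simp
    | add u v _ _ hu hv =>
      obtain ⟨c, w, hw, rfl⟩ := hu
      obtain ⟨c', w', hw', rfl⟩ := hv
      refine ⟨c + c', w + w', C.add_mem hw hw', ?_⟩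
      ext j
      rcases j with j | j
      · fin_cases j <;> simp [add_dotProduct] <;> ring
      · simp; ring
    | smul a u _ hu =>
      obtain ⟨c, w, hw, rfl⟩ := hu
      refine ⟨a * c, a • w, C.smul_mem a hw, ?_⟩
      ext j
      rcases j with j | j
      · fin_cases j <;> simp [smul_dotProduct] <;> ring
      · simp; ring
  have hdot : ∀ (a b c d : ZMod 2) (u v : Fin n → ZMod 2),
      ∑ i, (Sum.elim ![a, b] u : (Fin 2 ⊕ Fin n) → ZMod 2) i *
        (Sum.elim ![c, d] v : (Fin 2 ⊕ Fin n) → ZMod 2) i = a * c + b * d + u ⬝ᵥ v := by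
    intro a b c d u v
    simp [Fintype.sum_sum_type, Fin.sum_univ_two, dotProduct]
  apply Set.Subset.antisymm
  · intro v hv v' hv'
    obtain ⟨c, w, hw, rfl⟩ := hel v hv
    obtain ⟨c', w', hw', rfl⟩ := hel v' hv'
    rw [hdot]
    have h0 := (hC w).1 hw w' hw'
    simp only [add_dotProduct, dotProduct_add, smul_dotProduct, dotProduct_smul, hX', h0,
      dotProduct_comm X w', smul_eq_mul]
    linear_combination h2 (c * c' + c * (w' ⬝ᵥ X) + w ⬝ᵥ X * c' + w ⬝ᵥ X * (w' ⬝ᵥ X))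
  · intro v hv
    obtain ⟨a, b, z, rfl⟩ : ∃ a b z, v = Sum.elim ![a, b] z := by
      refine ⟨v (Sum.inl 0), v (Sum.inl 1), fun j => v (Sum.inr j), ?_⟩
      ext j
      rcases j with j | j
      · fin_cases j <;> simp
      · simp
    have e1 := hv _ hXD
    rw [hdot] at e1
    have hw : z + (a + b) • X ∈ C := by
      rw [hC]
      intro w hw
      have e2 := hv _ (hφ w hw)
      rw [hdot] at e2
      rw [add_dotProduct, smul_dotProduct, dotProduct_comm X w, smul_eq_mul]
      linear_combination e2
    have e3 : (z + (a + b) • X) ⬝ᵥ X = b := by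
      rw [add_dotProduct, smul_dotProduct, hX', smul_eq_mul]
      linear_combination e1
    have h4 := D.add_mem (hφ _ hw) (D.smul_mem (a + b) hXD)
    rw [e3] at h4
    show _ ∈ D
    convert h4 using 1
    ext j
    rcases j with j | j
    · fin_cases j
      · simp
        linear_combination -h2 b
      · simp
    · simp
      linear_combination -h2 ((a + b) * X j)
end

section
/- Let R = F₂+uF₂, let C ⊆ Rⁿ be a self-dual code spanned over R by vectors r₁, …, r_k, let c be a unit of R with c² = −1 (equivalently c² = 1, since char R = 2), and let X ∈ Rⁿ satisfy ⟨X,X⟩ = −1 (equivalently ⟨X,X⟩ = 1). Set yᵢ = ⟨rᵢ, X⟩ for each i. Then the code D ⊆ R^{n+2} spanned over R by the vector (1, 0, X) together with the vectors (yᵢ, c·yᵢ, rᵢ), 1 ≤ i ≤ k, is a self-dual code of length n+2 over R. -/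
/-- Extension theorem over `R = F₂+uF₂`: if `C ⊆ Rⁿ` is a self-dual code spanned over `R` by
`r₁, …, r_k`, `c` is a unit of `R` with `c² = -1`, and `X ∈ Rⁿ` satisfies `⟨X,X⟩ = -1`, then
with `yᵢ = ⟨rᵢ, X⟩`, the code `D ⊆ R^{n+2}` spanned over `R` by `(1, 0, X)` together with the
`(yᵢ, c·yᵢ, rᵢ)` is a self-dual code of length `n + 2` over `R`. -/
theorem extension_selfDual_F2u (n k : ℕ) (r : Fin k → (Fin n → F2u))
    (C : Submodule F2u (Fin n → F2u))
    (hgen : C = Submodule.span F2u (Set.range r))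
    (hsd : (C : Set (Fin n → F2u)) = dualCode (C : Set (Fin n → F2u)))
    (c : F2u) (hc : IsUnit c) (hc2 : c ^ 2 = -1)
    (X : Fin n → F2u) (hX : ∑ i, X i * X i = -1)
    (y : Fin k → F2u) (hy : ∀ i, y i = ∑ j, r i j * X j)
    (D : Submodule F2u ((Fin 2 ⊕ Fin n) → F2u))
    (hD : D = Submodule.span F2u
      ({(Sum.elim ![1, 0] X : (Fin 2 ⊕ Fin n) → F2u)} ∪
        Set.range fun i : Fin k =>
          (Sum.elim ![y i, c * y i] (r i) : (Fin 2 ⊕ Fin n) → F2u))) :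
    (D : Set ((Fin 2 ⊕ Fin n) → F2u)) = dualCode (D : Set ((Fin 2 ⊕ Fin n) → F2u)) := by
  have h2 : (2 : F2u) = 0 := by
    have h : (2 : ZMod 2) = 0 := by decide
    have h' : (2 : F2u) = algebraMap (ZMod 2) F2u 2 := (map_ofNat (algebraMap (ZMod 2) F2u) 2).symm
    rw [h', h, map_zero]
  let φ : (Fin n → F2u) →ₗ[F2u] ((Fin 2 ⊕ Fin n) → F2u) :=
    { toFun := fun z => Sum.elim ![z ⬝ᵥ X, c * (z ⬝ᵥ X)] z
      map_add' := by
        intro p q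
        funext j
        rcases j with j | j
        · fin_cases j <;> simp [add_dotProduct, mul_add]
        · simp
      map_smul' := by
        intro p q
        funext j
        rcases j with j | j
        · fin_cases j <;> simp [smul_dotProduct, mul_left_comm]
        · simp }
  have hφ : ∀ z, φ z = Sum.elim ![z ⬝ᵥ X, c * (z ⬝ᵥ X)] z := fun z => rfl
  have hXX : X ⬝ᵥ X = -1 := hX
  have hr : (fun i : Fin k => (Sum.elim ![y i, c * y i] (r i) : (Fin 2 ⊕ Fin n) → F2u))
      = φ ∘ r := by
    funext i
    simp only [Function.comp, hφ, hy, dotProduct]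
  have hD' : D = Submodule.span F2u {(Sum.elim ![1, 0] X : (Fin 2 ⊕ Fin n) → F2u)}
      ⊔ C.map φ := by
    rw [hD, hr, Submodule.span_union, hgen, Submodule.map_span, Set.range_comp]
  have hmem : ∀ v, v ∈ D ↔ ∃ s : F2u, ∃ z ∈ C,
      s • (Sum.elim ![1, 0] X : (Fin 2 ⊕ Fin n) → F2u) + φ z = v := by
    intro v
    rw [hD', Submodule.mem_sup]
    simp only [Submodule.mem_span_singleton, Submodule.mem_map]
    constructor
    · rintro ⟨_, ⟨s, rfl⟩, _, ⟨z, hz, rfl⟩, h⟩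
      exact ⟨s, z, hz, h⟩
    · rintro ⟨s, z, hz, h⟩
      exact ⟨_, ⟨s, rfl⟩, _, ⟨z, hz, rfl⟩, h⟩
  have hCd : ∀ z, z ∈ C ↔ ∀ w ∈ C, z ⬝ᵥ w = 0 := by
    intro z
    have := Set.ext_iff.mp hsd z
    exact this
  have hip : ∀ (v : (Fin 2 ⊕ Fin n) → F2u) (s : F2u) (z : Fin n → F2u),
      ∑ i, v i * (s • (Sum.elim ![1, 0] X : (Fin 2 ⊕ Fin n) → F2u) + φ z) i
      = v (Sum.inl 0) * (s + z ⬝ᵥ X) + v (Sum.inl 1) * (c * (z ⬝ᵥ X))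
        + (s * ((fun j => v (Sum.inr j)) ⬝ᵥ X) + (fun j => v (Sum.inr j)) ⬝ᵥ z) := by
    intro v s z
    rw [Fintype.sum_sum_type, Fin.sum_univ_two]
    congr 1
    · simp [hφ]
    · simp only [dotProduct, Finset.mul_sum, ← Finset.sum_add_distrib]
      refine Finset.sum_congr rfl fun j _ => ?_
      simp [hφ]
      ring
  ext v
  rw [SetLike.mem_coe]
  constructor
  · intro hv w hw
    obtain ⟨s, z, hz, rfl⟩ := (hmem v).1 hv
    obtain ⟨t, w, hwC, rfl⟩ := (hmem w).1 hw
    rw [hip]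
    have e0 : (s • (Sum.elim ![1, 0] X : (Fin 2 ⊕ Fin n) → F2u) + φ z) (Sum.inl 0)
        = s + z ⬝ᵥ X := by simp [hφ]
    have e1 : (s • (Sum.elim ![1, 0] X : (Fin 2 ⊕ Fin n) → F2u) + φ z) (Sum.inl 1)
        = c * (z ⬝ᵥ X) := by simp [hφ]
    have e2 : (fun j => (s • (Sum.elim ![1, 0] X : (Fin 2 ⊕ Fin n) → F2u) + φ z) (Sum.inr j))
        = s • X + z := by
      funext j
      simp [hφ]
    rw [e0, e1, e2]
    simp only [add_dotProduct, smul_dotProduct, smul_eq_mul, hXX, (hCd z).1 hz w hwC,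
      dotProduct_comm X w]
    linear_combination (z ⬝ᵥ X) * (w ⬝ᵥ X) * hc2 + (s * (w ⬝ᵥ X) + t * (z ⬝ᵥ X)) * h2
  · intro hv
    have hv' : ∀ (s : F2u) (z) (hz : z ∈ C), _ = (0 : F2u) := fun s z hz =>
      (hip v s z).symm.trans (hv _ ((hmem _).2 ⟨s, z, hz, rfl⟩))
    set a := v (Sum.inl 0) with ha
    set b := v (Sum.inl 1) with hb
    set w : Fin n → F2u := fun j => v (Sum.inr j) with hw
    have hA := hv' 1 0 C.zero_mem
    simp only [zero_dotProduct, dotProduct_zero] at hA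
    rw [hmem]
    refine ⟨a + b * c, w + (a + b * c) • X, ?_, ?_⟩
    · rw [hCd]
      intro z hz
      have := hv' 0 z hz
      rw [add_dotProduct, smul_dotProduct, dotProduct_comm X z, smul_eq_mul]
      linear_combination this
    · have hz : (w + (a + b * c) • X) ⬝ᵥ X = b * c := by
        rw [add_dotProduct, smul_dotProduct, hXX, smul_eq_mul]
        linear_combination hA - (a + b * c) * h2
      rw [hφ, hz]
      funext j
      rcases j with j | j
      · fin_cases j
        · simp
          linear_combination b * c * h2
        · simp
          linear_combination b * hc2 - b * h2
      · simp
        linear_combination (a + b * c) * X j * h2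
end

section
/- Let C ⊆ F₂^{2n} (F₂ = ZMod 2) be a self-dual binary code of length 2n (so dim C = n), and let x ∈ F₂^{2n} with x ∉ C and ⟨x,x⟩ = 0. Define D = (⟨x⟩⊥ ∩ C) + span{x}, where ⟨x⟩⊥ = {y ∈ F₂^{2n} : ⟨x,y⟩ = 0}. Then D is a self-dual binary code of length 2n, and D is a neighbour of C, i.e., dim(C ∩ D) = n − 1. -/
/-- Let `C ⊆ F₂^{2n}` be a self-dual binary code of length `2n` (so `dim C = n`), and let
`x ∉ C` with `⟨x,x⟩ = 0`. Then `D = (⟨x⟩⊥ ∩ C) + span{x}` is a self-dual binary code of length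
`2n` which is a neighbour of `C`, i.e. `dim (C ∩ D) = n - 1`. -/
theorem neighbour_selfDual (n : ℕ) (C : Submodule (ZMod 2) (Fin (2 * n) → ZMod 2))
    (hsd : (C : Set (Fin (2 * n) → ZMod 2)) = dualCode (C : Set (Fin (2 * n) → ZMod 2)))
    (hdim : Module.finrank (ZMod 2) C = n)
    (x : Fin (2 * n) → ZMod 2) (hx : x ∉ C) (hxx : ∑ i, x i * x i = 0)
    (D : Submodule (ZMod 2) (Fin (2 * n) → ZMod 2))
    (hD : D = Submodule.span (ZMod 2)
      ({y | y ∈ C ∧ ∑ i, x i * y i = 0} ∪ {x})) :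
    (D : Set (Fin (2 * n) → ZMod 2)) = dualCode (D : Set (Fin (2 * n) → ZMod 2)) ∧
    Module.finrank (ZMod 2) ↥(C ⊓ D) = n - 1 := by
  classical
  change ∑ i, x i * x i = 0 at hxx
  let φ : (Fin (2 * n) → ZMod 2) →ₗ[ZMod 2] (Fin (2 * n) → ZMod 2) →ₗ[ZMod 2] ZMod 2 :=
    LinearMap.mk₂ (ZMod 2) (fun a b => ∑ i, a i * b i)
      (fun a b c => by simp [add_mul, Finset.sum_add_distrib])
      (fun r a b => by simp [Finset.mul_sum, mul_assoc])
      (fun a b c => by simp [mul_add, Finset.sum_add_distrib])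
      (fun r a b => by simp [Finset.mul_sum, mul_left_comm])
  have hφ : ∀ a b, ∑ i, a i * b i = φ a b := fun a b => rfl
  have hcomm : ∀ a b, φ a b = φ b a := fun a b => by
    simp only [← hφ, mul_comm]
  have hC : ∀ a, a ∈ C ↔ ∀ b ∈ C, φ a b = 0 := fun a => by
    have := Set.ext_iff.mp hsd a
    exact this
  simp only [hφ] at hxx hD
  have hxD : x ∈ D := by
    rw [hD]; exact Submodule.subset_span (Or.inr rfl)
  have hCD : ∀ y ∈ C, φ x y = 0 → y ∈ D := fun y h1 h2 => by
    rw [hD]; exact Submodule.subset_span (Or.inl ⟨h1, h2⟩)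
  have hDle : ∀ z, φ z x = 0 → (∀ y ∈ C, φ x y = 0 → φ z y = 0) → ∀ d ∈ D, φ z d = 0 := by
    intro z h1 h2
    have : D ≤ LinearMap.ker (φ z) := by
      rw [hD, Submodule.span_le]
      rintro y (⟨hy, hy'⟩ | hy)
      · exact h2 y hy hy'
      · rw [Set.mem_singleton_iff] at hy
        subst hy
        exact h1
    exact this
  have hxperp : ∀ d ∈ D, φ x d = 0 := hDle x hxx (fun _ _ h => h)
  obtain ⟨c, hcC, hc⟩ : ∃ c ∈ C, φ x c ≠ 0 := by
    by_contra! h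
    exact hx ((hC x).2 h)
  have hc1 : φ x c = 1 := by
    generalize φ x c = t at hc
    revert hc; revert t; decide
  refine ⟨?_, ?_⟩
  · ext y
    change y ∈ D ↔ ∀ d ∈ D, φ y d = 0
    constructor
    · intro hy
      refine hDle y (by rw [hcomm]; exact hxperp y hy) ?_
      intro w hw hxw
      rw [hcomm]
      refine hDle w (by rw [hcomm]; exact hxw) ?_ y hy
      intro v hv _
      exact (hC w).1 hw v hv
    · intro hy
      have h1 : y - φ y c • x ∈ C := by
        rw [hC]
        intro b hb
        have h2 := hy (b - φ x b • c) (hCD _ (C.sub_mem hb (C.smul_mem _ hcC)) (by simp [hc1]))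
        simp only [map_sub, map_smul, smul_eq_mul, LinearMap.sub_apply, LinearMap.smul_apply]
          at h2 ⊢
        rw [mul_comm (φ y c)]
        exact h2
      have h3 : y - φ y c • x ∈ D := by
        refine hCD _ h1 ?_
        have := hy x hxD
        rw [hcomm] at this
        simp [this, hxx]
      have := D.add_mem h3 (D.smul_mem (φ y c) hxD)
      simpa using this
  · let ψ := (φ x).domRestrict C
    have hk : C ⊓ D = (LinearMap.ker ψ).map C.subtype := by
      ext y
      simp only [Submodule.mem_inf, Submodule.mem_map, LinearMap.mem_ker]
      constructor
      · rintro ⟨h1, h2⟩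
        exact ⟨⟨y, h1⟩, hxperp y h2, rfl⟩
      · rintro ⟨⟨w, hw⟩, h, rfl⟩
        exact ⟨hw, hCD w hw h⟩
    have hr : LinearMap.range ψ = ⊤ := by
      rw [LinearMap.range_eq_top]
      intro t
      refine ⟨t • ⟨c, hcC⟩, ?_⟩
      rw [map_smul]
      change t * φ x c = t
      rw [hc1, mul_one]
    have := ψ.finrank_range_add_finrank_ker
    rw [hr, finrank_top, Module.finrank_self, hdim] at this
    rw [hk, LinearEquiv.finrank_eq (Submodule.equivSubtypeMap C (LinearMap.ker ψ)).symm]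
    omega
end
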